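/- arXiv:1805.01121 — 2 statements merged into one kernel-verified Lean document; each statement's English description precedes it below -/
import Mathlib

section
/- Let n be a positive integer, let τ be a complex number with Im(τ) > 0, and set q = e^{πiτ}. Then for every complex number z, ∏_{k=0}^{n-1} sin_{q^n}(π(z + k/n)) = q^{(n-1)(n+1)/12} · ((q; q²)_∞)² / ((q^n; q^{2n})_∞)^{2n} · sin_q(nπz), where q^{(n-1)(n+1)/12} denotes e^{πiτ(n-1)(n+1)/12} and sin_{q^n} is formed with parameter nτ (nome q^n = e^{πinτ}). -/
open Complex

/-- Infinite q-Pochhammer symbol `(a; q)_∞ = ∏_{i=0}^∞ (1 - a qⁱ)`. -/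
noncomputable def qPoch (a q : ℂ) : ℂ := ∏' i : ℕ, (1 - a * q ^ i)

/-- Jacobi's first theta function
`θ₁(z | τ) = 2 ∑_{n=0}^∞ (-1)ⁿ e^{πiτ(2n+1)²/4} sin((2n+1)z)`. -/
noncomputable def theta1 (z τ : ℂ) : ℂ :=
  2 * ∑' n : ℕ, (-1 : ℂ) ^ n * Complex.exp (Real.pi * Complex.I * τ * (2 * n + 1) ^ 2 / 4) *
    Complex.sin ((2 * n + 1) * z)

/-- Gosper's q-sine with parameter `τ` (nome `q = e^{πiτ}`):
`sin_q(z) = θ₁(z | -1/τ) / θ₁(π/2 | -1/τ)`. -/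
noncomputable def qSin (τ z : ℂ) : ℂ :=
  theta1 z (-1 / τ) / theta1 ((Real.pi : ℂ) / 2) (-1 / τ)

/-!
Jacobi's imaginary transformation carries `θ₁(πx | -1/τ)` to a theta series in `q = e^{πiτ}`, which
the triple product identity factors as `q^{(x - 1/2)²} (q^{2x}; q²)_∞ (q^{2 - 2x}; q²)_∞` times a
constant that cancels in the `q`-sine. With `q` replaced by `qⁿ` and `x = z + k/n`, the first symbol
is `(a p^k; pⁿ)_∞` for `p = q²` and `a = q^{2nz}`; as `k` runs over the residues modulo `n` these
interlock to `(a; p)_∞`, and likewise for the second symbol. The prefactor comes from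
`∑ n (z + k/n - 1/2)² = (n² - 1)/12 + (nz - 1/2)²`.

The triple product identity is the limit of its finite form, whose coefficients are Gaussian
binomials: they tend to `1 / (q²; q²)_∞` and are uniformly bounded, so dominated convergence
applies.
-/

open Filter Topology
open scoped Real

section QPochhammer

variable {q : ℂ}

lemma norm_pow_lt_one (hq : ‖q‖ < 1) {n : ℕ} (hn : n ≠ 0) : ‖q ^ n‖ < 1 := by
  rw [norm_pow]
  exact pow_lt_one₀ (norm_nonneg q) hq hn

lemma summable_norm_neg_mul_pow (a : ℂ) (hq : ‖q‖ < 1) : Summable fun i : ℕ ↦ ‖-(a * q ^ i)‖ := by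
  simpa using (summable_geometric_of_lt_one (norm_nonneg q) hq).mul_left ‖a‖

lemma hasProd_qPoch (a : ℂ) (hq : ‖q‖ < 1) :
    HasProd (fun i : ℕ ↦ 1 - a * q ^ i) (qPoch a q) := by
  have h : Multipliable fun i : ℕ ↦ 1 - a * q ^ i := by
    simpa only [sub_eq_add_neg] using
      multipliable_one_add_of_summable (summable_norm_neg_mul_pow a hq)
  exact h.hasProd

lemma qPoch_ne_zero {a : ℂ} (hq : ‖q‖ < 1) (ha : ∀ i : ℕ, a * q ^ i ≠ 1) : qPoch a q ≠ 0 := by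
  simpa only [qPoch, sub_eq_add_neg] using
    tprod_one_add_ne_zero_of_summable (f := fun i : ℕ ↦ -(a * q ^ i))
      (fun i ↦ by simpa only [← sub_eq_add_neg, sub_ne_zero] using (ha i).symm)
      (summable_norm_neg_mul_pow a hq)

lemma qPoch_ne_zero_of_norm_lt_one {a : ℂ} (ha : ‖a‖ < 1) (hq : ‖q‖ < 1) : qPoch a q ≠ 0 := by
  refine qPoch_ne_zero hq fun i h ↦ ?_
  have : ‖a * q ^ i‖ < 1 := by
    rw [norm_mul, norm_pow]
    exact mul_lt_one_of_nonneg_of_lt_one_left (norm_nonneg a) ha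
      (pow_le_one₀ (norm_nonneg q) hq.le)
  simp [h] at this

lemma prod_qPoch_mul_pow (a : ℂ) (hq : ‖q‖ < 1) {n : ℕ} (hn : n ≠ 0) :
    ∏ k ∈ Finset.range n, qPoch (a * q ^ k) (q ^ n) = qPoch a q := by
  have : NeZero n := ⟨hn⟩
  let residueFirst : Fin n × ℕ ≃ ℕ := (Equiv.prodComm _ _).trans (Nat.divModEquiv n).symm
  have h : HasProd (fun k : Fin n ↦ qPoch (a * q ^ (k : ℕ)) (q ^ n)) (qPoch a q) := by
    refine (residueFirst.hasProd_iff.mpr (hasProd_qPoch a hq)).prod_fiberwise fun k ↦ ?_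
    convert! hasProd_qPoch (a * q ^ (k : ℕ)) (norm_pow_lt_one hq hn) using 2 with i
    simp only [Function.comp_apply, residueFirst, Equiv.trans_apply, Equiv.prodComm_apply,
      Prod.swap_prod_mk, Nat.divModEquiv_symm_apply]
    ring
  rw [Finset.prod_range, ← h.tprod_eq, tprod_fintype]

end QPochhammer

section ModifiedTheta

/-- The modified theta function `θ(a; p) = (a; p)_∞ (p / a; p)_∞`, in terms of which both the
triple product identity and the product formula for `θ₁` are written. -/
noncomputable def modifiedTheta (a p : ℂ) : ℂ := qPoch a p * qPoch (p / a) p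

lemma prod_modifiedTheta_mul_pow (a : ℂ) {p : ℂ} (hp0 : p ≠ 0) (hp : ‖p‖ < 1) {n : ℕ}
    (hn : n ≠ 0) :
    ∏ k ∈ Finset.range n, modifiedTheta (a * p ^ k) (p ^ n) = modifiedTheta a p := by
  have hreflect : ∏ k ∈ Finset.range n, qPoch (p ^ n / (a * p ^ k)) (p ^ n) =
      ∏ k ∈ Finset.range n, qPoch (p / a * p ^ k) (p ^ n) := by
    rw [← Finset.prod_range_reflect]
    refine Finset.prod_congr rfl fun k hk ↦ ?_
    obtain ⟨m, rfl⟩ := Nat.exists_eq_add_of_lt (Finset.mem_range.mp hk)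
    rw [show k + m + 1 - 1 - k = m by lia]
    congr 1
    field_simp
    ring
  simp only [modifiedTheta, Finset.prod_mul_distrib, hreflect, prod_qPoch_mul_pow _ hp hn]

end ModifiedTheta

section GaussianBinomial

variable {K : Type*} [Field K] {q : K}

/-- The finite `q`-Pochhammer symbol `(q; q)_m = (1 - q) (1 - q²) ⋯ (1 - q ^ m)`, which is the
`q`-factorial up to a power of `1 - q`. -/
def qFactorial (q : K) (m : ℕ) : K := ∏ i ∈ Finset.range m, (1 - q ^ (i + 1))

/-- The reciprocal `1 / (q; q)_m`, extended by zero to negative integers `m` so that sums over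
Gaussian binomial coefficients can run over all of `ℤ`. -/
def invQFactorial (q : K) : ℤ → K
  | Int.ofNat m => (qFactorial q m)⁻¹
  | Int.negSucc _ => 0

/-- The Gaussian binomial coefficient `(q; q)_m / ((q; q)_k (q; q)_{m - k})`, which vanishes unless
`0 ≤ k ≤ m`. -/
def gaussBinom (q : K) (m : ℕ) (k : ℤ) : K :=
  qFactorial q m * invQFactorial q k * invQFactorial q (m - k)

lemma qFactorial_succ (q : K) (m : ℕ) :
    qFactorial q (m + 1) = qFactorial q m * (1 - q ^ (m + 1)) :=
  Finset.prod_range_succ ..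

@[simp]
lemma invQFactorial_natCast (q : K) (m : ℕ) : invQFactorial q m = (qFactorial q m)⁻¹ := rfl

@[simp]
lemma invQFactorial_negSucc (q : K) (m : ℕ) : invQFactorial q (Int.negSucc m) = 0 := rfl

lemma invQFactorial_sub_one (hq : ¬IsOfFinOrder q) (m : ℤ) :
    invQFactorial q (m - 1) = (1 - q ^ m) * invQFactorial q m := by
  match m with
  | (0 : ℕ) =>
    rw [show ((0 : ℕ) : ℤ) - 1 = Int.negSucc 0 by lia, invQFactorial_negSucc, Nat.cast_zero,
      zpow_zero, sub_self, zero_mul]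
  | (m + 1 : ℕ) =>
    have hm : 1 - q ^ (m + 1) ≠ 0 := sub_ne_zero.mpr fun h ↦
      hq (isOfFinOrder_iff_pow_eq_one.mpr ⟨m + 1, m.succ_pos, h.symm⟩)
    rw [show ((m + 1 : ℕ) : ℤ) - 1 = m by simp, invQFactorial_natCast, invQFactorial_natCast,
      zpow_natCast, qFactorial_succ, mul_inv, mul_left_comm, mul_inv_cancel₀ hm, mul_one]
  | Int.negSucc m =>
    rw [show Int.negSucc m - 1 = Int.negSucc (m + 1) by lia, invQFactorial_negSucc,
      invQFactorial_negSucc, mul_zero]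

lemma gaussBinom_symm (q : K) (m : ℕ) (k : ℤ) : gaussBinom q m (m - k) = gaussBinom q m k := by
  rw [gaussBinom, gaussBinom, sub_sub_cancel, mul_right_comm]

lemma gaussBinom_zero (q : K) (k : ℤ) : gaussBinom q 0 k = if k = 0 then 1 else 0 := by
  match k with
  | (0 : ℕ) => simp [gaussBinom, invQFactorial, qFactorial]
  | (k + 1 : ℕ) =>
    have hk : (0 : ℕ) - ((k + 1 : ℕ) : ℤ) = Int.negSucc k := by lia
    rw [gaussBinom, hk, invQFactorial_negSucc, mul_zero, if_neg (by lia)]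
  | Int.negSucc k => simp [gaussBinom]

lemma gaussBinom_succ (hq0 : q ≠ 0) (hq : ¬IsOfFinOrder q) (m : ℕ) (k : ℤ) :
    gaussBinom q (m + 1) k =
      gaussBinom q m k + q ^ ((m : ℤ) + 1 - k) * gaussBinom q m (k - 1) := by
  have hk := invQFactorial_sub_one hq k
  have hmk := invQFactorial_sub_one hq (m + 1 - k)
  have hpow : q ^ (m + 1) = q ^ ((m : ℤ) + 1 - k) * q ^ k := by
    rw [← zpow_add₀ hq0, sub_add_cancel]
    exact_mod_cast (zpow_natCast q (m + 1)).symm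
  simp only [gaussBinom, qFactorial_succ, hpow, Nat.cast_add, Nat.cast_one, hk,
    show (m : ℤ) - k = m + 1 - k - 1 by ring, show (m : ℤ) - (k - 1) = m + 1 - k by ring, hmk]
  ring

lemma gaussBinom_succ' (hq0 : q ≠ 0) (hq : ¬IsOfFinOrder q) (m : ℕ) (k : ℤ) :
    gaussBinom q (m + 1) k = q ^ k * gaussBinom q m k + gaussBinom q m (k - 1) := by
  have hk : ((m + 1 : ℕ) : ℤ) - k = m - (k - 1) := by lia
  rw [← gaussBinom_symm, gaussBinom_succ hq0 hq, ← gaussBinom_symm q m k, hk, gaussBinom_symm,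
    show (m : ℤ) - (k - 1) - 1 = m - k by ring, show (m : ℤ) + 1 - (m - (k - 1)) = k by ring,
    add_comm]

end GaussianBinomial

section FiniteTripleProduct

variable {K : Type*} [Field K] {q : K}

/-- The coefficient of `x ^ k` in the finite triple product
`∏_{i < M} (1 + x q ^ (2 i + 1)) ∏_{i < N} (1 + x⁻¹ q ^ (2 i + 1))`. The two factors have separate
lengths so that each recurrence below adds a single linear factor and becomes a Pascal rule. -/
def tripleProductCoeff (q : K) (M N : ℕ) (k : ℤ) : K :=
  gaussBinom (q ^ 2) (M + N) (N + k) * q ^ (k ^ 2)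

lemma tripleProductCoeff_zero_zero (q : K) (k : ℤ) :
    tripleProductCoeff q 0 0 k = if k = 0 then 1 else 0 := by
  simp only [tripleProductCoeff, gaussBinom_zero, Nat.cast_zero, zero_add]
  split_ifs with hk <;> simp [hk]

lemma tripleProductCoeff_succ_left (hq0 : q ≠ 0) (hq : ¬IsOfFinOrder q) (M N : ℕ) (k : ℤ) :
    tripleProductCoeff q (M + 1) N k =
      tripleProductCoeff q M N k + q ^ (2 * M + 1) * tripleProductCoeff q M N (k - 1) := by
  have hpow : (q ^ 2) ^ (((M + N : ℕ) : ℤ) + 1 - (N + k)) * q ^ (k ^ 2) =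
      q ^ (2 * M + 1) * q ^ ((k - 1) ^ 2) := by
    simp only [← zpow_natCast, ← zpow_mul, ← zpow_add₀ hq0]
    congr 1
    push_cast
    ring
  simp only [tripleProductCoeff]
  rw [add_right_comm, gaussBinom_succ (pow_ne_zero 2 hq0) (by simpa [isOfFinOrder_pow] using hq),
    ← add_sub_assoc, add_mul, mul_right_comm, hpow]
  ring

lemma tripleProductCoeff_succ_right (hq0 : q ≠ 0) (hq : ¬IsOfFinOrder q) (M N : ℕ) (k : ℤ) :
    tripleProductCoeff q M (N + 1) k =
      tripleProductCoeff q M N k + q ^ (2 * N + 1) * tripleProductCoeff q M N (k + 1) := by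
  have hpow : (q ^ 2) ^ ((N : ℤ) + (k + 1)) * q ^ (k ^ 2) =
      q ^ (2 * N + 1) * q ^ ((k + 1) ^ 2) := by
    simp only [← zpow_natCast, ← zpow_mul, ← zpow_add₀ hq0]
    congr 1
    push_cast
    ring
  simp only [tripleProductCoeff]
  rw [← add_assoc, gaussBinom_succ' (pow_ne_zero 2 hq0) (by simpa [isOfFinOrder_pow] using hq),
    show ((N + 1 : ℕ) : ℤ) + k = N + (k + 1) by lia, show (N : ℤ) + (k + 1) - 1 = N + k by ring,
    add_mul, mul_right_comm, hpow]
  ring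

lemma hasSum_tripleProductCoeff_mul_zpow [TopologicalSpace K] [IsTopologicalSemiring K] {x : K}
    (hq0 : q ≠ 0) (hq : ¬IsOfFinOrder q) (hx : x ≠ 0) (M N : ℕ) :
    HasSum (fun k : ℤ ↦ tripleProductCoeff q M N k * x ^ k)
      ((∏ i ∈ Finset.range M, (1 + x * q ^ (2 * i + 1))) *
        ∏ i ∈ Finset.range N, (1 + x⁻¹ * q ^ (2 * i + 1))) := by
  induction M with
  | zero =>
    induction N with
    | zero =>
      simpa [tripleProductCoeff_zero_zero] using
        hasSum_single (f := fun k : ℤ ↦ tripleProductCoeff q 0 0 k * x ^ k) 0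
          fun k hk ↦ by simp [tripleProductCoeff_zero_zero, hk]
    | succ N ih =>
      have hshift := (Equiv.addRight (1 : ℤ)).hasSum_iff.mpr ih
      convert! ih.add (hshift.mul_left (x⁻¹ * q ^ (2 * N + 1))) using 1
      · ext k
        rw [Function.comp_apply, Equiv.coe_addRight, tripleProductCoeff_succ_right hq0 hq,
          zpow_add_one₀ hx]
        field_simp
      · rw [Finset.prod_range_succ]
        ring
  | succ M ih =>
    have hshift := (Equiv.subRight (1 : ℤ)).hasSum_iff.mpr ih
    convert! ih.add (hshift.mul_left (x * q ^ (2 * M + 1))) using 1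
    · ext k
      rw [Function.comp_apply, Equiv.subRight_apply, tripleProductCoeff_succ_left hq0 hq,
        zpow_sub_one₀ hx]
      field_simp
    · rw [Finset.prod_range_succ]
      ring

end FiniteTripleProduct

section TripleProduct

variable {q : ℂ}

lemma tendsto_qFactorial (hq : ‖q‖ < 1) :
    Tendsto (qFactorial q) atTop (𝓝 (qPoch q q)) :=
  (hasProd_qPoch q hq).tendsto_prod_nat.congr fun m ↦ by simp only [qFactorial, pow_succ']

lemma tendsto_invQFactorial (hq : ‖q‖ < 1) :
    Tendsto (invQFactorial q) atTop (𝓝 (qPoch q q)⁻¹) := by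
  rw [← Nat.map_cast_int_atTop, tendsto_map'_iff]
  exact (tendsto_qFactorial hq).inv₀ (qPoch_ne_zero_of_norm_lt_one hq hq)

lemma tendsto_gaussBinom_add_self (hq : ‖q‖ < 1) (k : ℤ) :
    Tendsto (fun N : ℕ ↦ gaussBinom q (N + N) (N + k)) atTop (𝓝 (qPoch q q)⁻¹) := by
  have hcast : Tendsto (fun N : ℕ ↦ (N : ℤ)) atTop atTop := tendsto_natCast_atTop_atTop
  have htop (j : ℤ) : Tendsto (fun N : ℕ ↦ invQFactorial q (N + j)) atTop (𝓝 (qPoch q q)⁻¹) :=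
    (tendsto_invQFactorial hq).comp (tendsto_atTop_add_const_right _ j hcast)
  have hfac : Tendsto (fun N : ℕ ↦ qFactorial q (N + N)) atTop (𝓝 (qPoch q q)) :=
    (tendsto_qFactorial hq).comp (tendsto_id.atTop_add_atTop tendsto_id)
  convert! (hfac.mul (htop k)).mul (htop (-k)) using 2 with N
  · rw [gaussBinom]
    congr 2
    push_cast
    ring
  · rw [mul_inv_cancel₀ (qPoch_ne_zero_of_norm_lt_one hq hq), one_mul]

lemma exists_norm_gaussBinom_le (hq : ‖q‖ < 1) : ∃ C, ∀ m k, ‖gaussBinom q m k‖ ≤ C := by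
  obtain ⟨A, hA⟩ := (tendsto_qFactorial hq).norm.bddAbove_range
  obtain ⟨B, hB⟩ :=
    ((tendsto_qFactorial hq).inv₀ (qPoch_ne_zero_of_norm_lt_one hq hq)).norm.bddAbove_range
  have hA' (m : ℕ) : ‖qFactorial q m‖ ≤ A := hA ⟨m, rfl⟩
  have hB' (k : ℤ) : ‖invQFactorial q k‖ ≤ B := by
    match k with
    | (k : ℕ) => exact hB ⟨k, rfl⟩
    | Int.negSucc k => simpa using (norm_nonneg _).trans (hB ⟨0, rfl⟩)
  refine ⟨A * B * B, fun m k ↦ ?_⟩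
  have hA0 : 0 ≤ A := (norm_nonneg _).trans (hA' 0)
  have hB0 : 0 ≤ B := (norm_nonneg _).trans (hB' 0)
  rw [gaussBinom, norm_mul, norm_mul]
  gcongr
  exacts [hA' m, hB' k, hB' _]

open Function.Periodic in
lemma summable_zpow_sq_mul_zpow {x : ℂ} (hq0 : q ≠ 0) (hq : ‖q‖ < 1) (hx : x ≠ 0) :
    Summable fun k : ℤ ↦ q ^ (k ^ 2) * x ^ k := by
  have hτ := im_invQParam_pos_of_norm_lt_one two_pos hq hq0
  convert! (summable_jacobiTheta₂_term_iff (invQParam 1 x) (invQParam 2 q)).mpr hτ using 2 with k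
  conv_lhs => rw [← qParam_right_inv two_ne_zero hq0, ← qParam_right_inv one_ne_zero hx]
  rw [qParam, qParam, jacobiTheta₂_term, ← exp_int_mul, ← exp_int_mul, ← exp_add]
  congr 1
  push_cast
  ring

theorem jacobi_tripleProduct {x : ℂ} (hq0 : q ≠ 0) (hq : ‖q‖ < 1) (hx : x ≠ 0) :
    ∑' k : ℤ, q ^ (k ^ 2) * x ^ k =
      qPoch (q ^ 2) (q ^ 2) * modifiedTheta (-(x * q)) (q ^ 2) := by
  have hp : ‖q ^ 2‖ < 1 := norm_pow_lt_one hq two_ne_zero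
  obtain ⟨C, hC⟩ := exists_norm_gaussBinom_le hp
  have hsum : Tendsto (fun N ↦ ∑' k : ℤ, tripleProductCoeff q N N k * x ^ k) atTop
      (𝓝 (∑' k : ℤ, (qPoch (q ^ 2) (q ^ 2))⁻¹ * q ^ (k ^ 2) * x ^ k)) := by
    refine tendsto_tsum_of_dominated_convergence
      ((summable_zpow_sq_mul_zpow hq0 hq hx).norm.mul_left C)
      (fun k ↦ ((tendsto_gaussBinom_add_self hp k).mul_const _).mul_const _)
      (Eventually.of_forall fun N k ↦ ?_)
    rw [tripleProductCoeff, mul_assoc, norm_mul]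
    gcongr
    exact hC _ _
  have hprod : Tendsto (fun N ↦ ∑' k : ℤ, tripleProductCoeff q N N k * x ^ k) atTop
      (𝓝 (modifiedTheta (-(x * q)) (q ^ 2))) := by
    convert! (hasProd_qPoch (-(x * q)) hp).tendsto_prod_nat.mul
      (hasProd_qPoch (q ^ 2 / -(x * q)) hp).tendsto_prod_nat using 2 with N
    rw [(hasSum_tripleProductCoeff_mul_zpow hq0 (fun h ↦ hq.ne h.norm_eq_one) hx N N).tsum_eq]
    congr 1 <;> refine Finset.prod_congr rfl fun i _ ↦ ?_
    · ring
    · field_simp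
      ring
  rw [← tendsto_nhds_unique hsum hprod, ← tsum_mul_left]
  refine tsum_congr fun k ↦ ?_
  rw [mul_assoc, mul_inv_cancel_left₀ (qPoch_ne_zero_of_norm_lt_one hp hp)]

end TripleProduct

section Nome

variable {τ : ℂ}

/-- The nome `e^{πiτ}`. -/
noncomputable def nome (τ : ℂ) : ℂ := cexp (π * I * τ)

lemma nome_ne_zero (τ : ℂ) : nome τ ≠ 0 := exp_ne_zero _

lemma nome_natCast_mul (n : ℕ) (τ : ℂ) : nome (n * τ) = nome τ ^ n := by
  rw [nome, nome, ← exp_nat_mul, mul_left_comm]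

lemma norm_nome_lt_one (hτ : 0 < τ.im) : ‖nome τ‖ < 1 := by
  rw [nome, norm_exp, Real.exp_lt_one_iff]
  simpa using mul_pos Real.pi_pos hτ

lemma norm_nome_sq_lt_one (hτ : 0 < τ.im) : ‖nome τ ^ 2‖ < 1 :=
  norm_pow_lt_one (norm_nome_lt_one hτ) two_ne_zero

end Nome

section ThetaProduct

variable {τ : ℂ}

lemma jacobiTheta₂_eq_modifiedTheta (z : ℂ) (hτ : 0 < τ.im) :
    jacobiTheta₂ z τ = qPoch (nome τ ^ 2) (nome τ ^ 2) *
      modifiedTheta (-cexp (π * I * (2 * z + τ))) (nome τ ^ 2) := by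
  have hexp : cexp (π * I * (2 * z + τ)) = cexp (2 * π * I * z) * nome τ := by
    rw [nome, ← exp_add]
    ring_nf
  rw [hexp, ← jacobi_tripleProduct (nome_ne_zero τ) (norm_nome_lt_one hτ) (exp_ne_zero _)]
  refine tsum_congr fun k ↦ ?_
  rw [jacobiTheta₂_term, nome, ← exp_int_mul, ← exp_int_mul, ← exp_add]
  congr 1
  push_cast
  ring

lemma exp_mul_jacobiTheta₂_term_half_period_sub (k : ℤ) (z τ : ℂ) :
    cexp (π * I * τ / 4 - I * z) * jacobiTheta₂_term k ((1 + τ) / 2 - z / π) τ =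
      (-1) ^ k * cexp (π * I * τ * (2 * k + 1) ^ 2 / 4) * cexp (-((2 * k + 1) * z) * I) := by
  have hpi : (π : ℂ) ≠ 0 := ofReal_ne_zero.mpr Real.pi_ne_zero
  rw [jacobiTheta₂_term, ← exp_pi_mul_I, ← exp_int_mul, ← exp_add, ← exp_add, ← exp_add]
  congr 1
  field_simp
  ring

lemma theta1_eq_jacobiTheta₂ (z : ℂ) (hτ : 0 < τ.im) :
    theta1 z τ = I * cexp (π * I * τ / 4 - I * z) * jacobiTheta₂ (z / π - (1 + τ) / 2) τ := by
  have h := ((hasSum_jacobiTheta₂_term ((1 + τ) / 2 - z / π) hτ).mul_left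
    (cexp (π * I * τ / 4 - I * z))).nat_add_neg_add_one
  simp only [exp_mul_jacobiTheta₂_term_half_period_sub] at h
  rw [← jacobiTheta₂_neg_left, neg_sub, mul_assoc, ← h.tsum_eq, theta1, ← tsum_mul_left,
    ← tsum_mul_left]
  refine tsum_congr fun n ↦ ?_
  have hodd : (2 * ((-(n + 1) : ℤ) : ℂ) + 1) = -(2 * n + 1) := by
    push_cast
    ring
  have hsign : (-1 : ℂ) ^ (-(n + 1) : ℤ) = -(-1) ^ n := by
    rw [zpow_neg, ← inv_zpow, inv_neg_one, zpow_add_one₀ (by simp), zpow_natCast, mul_neg_one]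
  rw [hodd, hsign, neg_sq, Complex.sin, Int.cast_natCast, zpow_natCast]
  simp only [neg_mul, neg_neg]
  ring

lemma theta1_neg_one_div (x : ℂ) (hτ : 0 < τ.im) :
    theta1 (π * x) (-1 / τ) = (-I * τ) ^ (1 / 2 : ℂ) * cexp (π * I * τ * (x - 1 / 2) ^ 2) *
      jacobiTheta₂ (τ * (x - 1 / 2) + 1 / 2) τ := by
  have hpi : (π : ℂ) ≠ 0 := ofReal_ne_zero.mpr Real.pi_ne_zero
  have hτ0 : τ ≠ 0 := UpperHalfPlane.ne_zero ⟨τ, hτ⟩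
  have hroot : (-I * τ) ^ (1 / 2 : ℂ) ≠ 0 := by simp [cpow_eq_zero_iff, hτ0]
  have hτ' : 0 < (-1 / τ).im := by
    simpa [neg_div] using UpperHalfPlane.im_inv_neg_coe_pos ⟨τ, hτ⟩
  have harg : (τ * (x - 1 / 2) + 1 / 2) / τ = π * x / π - (1 + -1 / τ) / 2 := by
    field_simp
    ring
  have hexp : I * cexp (π * I * (-1 / τ) / 4 - I * (π * x)) =
      cexp (π * I * τ * (x - 1 / 2) ^ 2) *
        cexp (-π * I * (τ * (x - 1 / 2) + 1 / 2) ^ 2 / τ) := by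
    nth_rewrite 1 [← exp_pi_div_two_mul_I]
    rw [← exp_add, ← exp_add]
    congr 1
    field_simp
    ring
  rw [theta1_eq_jacobiTheta₂ _ hτ', jacobiTheta₂_functional_equation _ τ, harg, hexp]
  field_simp [hroot]

lemma theta1_neg_one_div_eq_modifiedTheta (x : ℂ) (hτ : 0 < τ.im) :
    theta1 (π * x) (-1 / τ) =
      ((-I * τ) ^ (1 / 2 : ℂ) * qPoch (nome τ ^ 2) (nome τ ^ 2)) *
        (cexp (π * I * τ * (x - 1 / 2) ^ 2) *
          modifiedTheta (cexp (2 * π * I * τ * x)) (nome τ ^ 2)) := by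
  have hexp : -cexp (π * I * (2 * (τ * (x - 1 / 2) + 1 / 2) + τ)) = cexp (2 * π * I * τ * x) := by
    rw [← neg_one_mul, ← exp_neg_pi_mul_I, ← exp_add]
    ring_nf
  rw [theta1_neg_one_div x hτ, jacobiTheta₂_eq_modifiedTheta _ hτ, hexp]
  ring

lemma modifiedTheta_nome (τ : ℂ) :
    modifiedTheta (nome τ) (nome τ ^ 2) = qPoch (nome τ) (nome τ ^ 2) ^ 2 := by
  have hdiv : nome τ ^ 2 / nome τ = nome τ := by
    rw [sq, mul_div_cancel_left₀ _ (nome_ne_zero τ)]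
  rw [modifiedTheta, hdiv, ← sq]

lemma qSin_pi_mul (x : ℂ) (hτ : 0 < τ.im) :
    qSin τ (π * x) = cexp (π * I * τ * (x - 1 / 2) ^ 2) *
      modifiedTheta (cexp (2 * π * I * τ * x)) (nome τ ^ 2) /
        qPoch (nome τ) (nome τ ^ 2) ^ 2 := by
  have hτ0 : τ ≠ 0 := UpperHalfPlane.ne_zero ⟨τ, hτ⟩
  have hroot : (-I * τ) ^ (1 / 2 : ℂ) ≠ 0 := by simp [cpow_eq_zero_iff, hτ0]
  have hp := norm_nome_sq_lt_one hτ
  have hhalf : cexp (2 * π * I * τ * (1 / 2)) = nome τ := by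
    rw [nome]
    ring_nf
  rw [qSin, show (π : ℂ) / 2 = π * (1 / 2) by ring, theta1_neg_one_div_eq_modifiedTheta x hτ,
    theta1_neg_one_div_eq_modifiedTheta _ hτ,
    mul_div_mul_left _ _ (mul_ne_zero hroot (qPoch_ne_zero_of_norm_lt_one hp hp)), hhalf,
    modifiedTheta_nome, sub_self, zero_pow two_ne_zero, mul_zero, exp_zero, one_mul]

end ThetaProduct

section Multiplication

lemma sum_range_add_natCast_sq (c : ℂ) (n : ℕ) :
    ∑ k ∈ Finset.range n, (c + k) ^ 2 =
      n * (n - 1) * (n + 1) / 12 + n * (c + (n - 1) / 2) ^ 2 := by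
  induction n with
  | zero => simp
  | succ n ih =>
    rw [Finset.sum_range_succ, ih]
    push_cast
    ring

variable {n : ℕ}

lemma prod_exp_pi_mul_sq (hn : n ≠ 0) (τ z : ℂ) :
    ∏ k ∈ Finset.range n, cexp (π * I * (n * τ) * (z + k / n - 1 / 2) ^ 2) =
      cexp (π * I * τ * (n - 1) * (n + 1) / 12) * cexp (π * I * τ * (n * z - 1 / 2) ^ 2) := by
  have hn0 : (n : ℂ) ≠ 0 := Nat.cast_ne_zero.mpr hn
  have hterm (k : ℕ) : π * I * (n * τ) * (z + k / n - 1 / 2) ^ 2 =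
      π * I * τ / n * (n * z - n / 2 + k) ^ 2 := by
    field_simp
    ring
  simp only [hterm]
  rw [← exp_sum, ← exp_add, ← Finset.mul_sum, sum_range_add_natCast_sq]
  congr 1
  field_simp
  ring

lemma prod_modifiedTheta_exp (hn : n ≠ 0) {τ : ℂ} (hτ : 0 < τ.im) (z : ℂ) :
    ∏ k ∈ Finset.range n,
        modifiedTheta (cexp (2 * π * I * (n * τ) * (z + k / n))) (nome (n * τ) ^ 2) =
      modifiedTheta (cexp (2 * π * I * τ * (n * z))) (nome τ ^ 2) := by
  have hn0 : (n : ℂ) ≠ 0 := Nat.cast_ne_zero.mpr hn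
  have hexp (k : ℕ) : cexp (2 * π * I * (n * τ) * (z + k / n)) =
      cexp (2 * π * I * τ * (n * z)) * (nome τ ^ 2) ^ k := by
    rw [← pow_mul, ← nome_natCast_mul, nome, ← exp_add]
    congr 1
    push_cast
    field_simp
  simp only [hexp, nome_natCast_mul, pow_right_comm _ n 2]
  exact prod_modifiedTheta_mul_pow _ (pow_ne_zero 2 (nome_ne_zero τ)) (norm_nome_sq_lt_one hτ) hn

end Multiplication

theorem gosper_sine_product (n : ℕ) (hn : 0 < n) (τ : ℂ) (hτ : 0 < τ.im)
    (q : ℂ) (hq : q = Complex.exp (Real.pi * Complex.I * τ)) (z : ℂ) :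
    ∏ k ∈ Finset.range n, qSin ((n : ℂ) * τ) ((Real.pi : ℂ) * (z + (k : ℂ) / n)) =
      Complex.exp (Real.pi * Complex.I * τ * ((n : ℂ) - 1) * ((n : ℂ) + 1) / 12) *
        (qPoch q (q ^ 2)) ^ 2 / (qPoch (q ^ n) (q ^ (2 * n))) ^ (2 * n) *
        qSin τ ((n : ℂ) * Real.pi * z) := by
  obtain rfl : q = nome τ := hq
  have hnτ : 0 < ((n : ℂ) * τ).im := by simpa using mul_pos (Nat.cast_pos.mpr hn) hτ
  have hne : qPoch (nome τ) (nome τ ^ 2) ≠ 0 :=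
    qPoch_ne_zero_of_norm_lt_one (norm_nome_lt_one hτ) (norm_nome_sq_lt_one hτ)
  have hnome : nome (n * τ) ^ 2 = nome τ ^ (2 * n) := by
    rw [nome_natCast_mul, ← pow_mul, mul_comm]
  have hdenom : ∏ k ∈ Finset.range n, qPoch (nome (n * τ)) (nome (n * τ) ^ 2) ^ 2 =
      qPoch (nome τ ^ n) (nome τ ^ (2 * n)) ^ (2 * n) := by
    rw [hnome, nome_natCast_mul, Finset.prod_const, Finset.card_range, ← pow_mul]
  simp only [qSin_pi_mul _ hnτ, Finset.prod_div_distrib, Finset.prod_mul_distrib]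
  rw [prod_exp_pi_mul_sq hn.ne', prod_modifiedTheta_exp hn.ne' hτ, hdenom,
    show (n : ℂ) * π * z = π * (n * z) by ring, qSin_pi_mul _ hτ]
  field_simp
end

section
/- Let n be a positive integer and let q be a real number with 0 < q < 1. Then ∏_{k=1}^{n-1} Γ_q(k/n) = (Γ_q(1/2))^{n-1} · ((q^{1/2}; q)_∞)^{n-1} (q; q)_∞ / (q^{1/n}; q^{1/n})_∞. -/
/-- Infinite q-Pochhammer symbol `(a; q)_∞ = ∏_{i=0}^∞ (1 - a qⁱ)` (real version). -/
noncomputable def qPochR (a q : ℝ) : ℝ := ∏' i : ℕ, (1 - a * q ^ i)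

/-- The q-gamma function `Γ_q(z) = ((q;q)_∞ / (q^z;q)_∞) (1-q)^{1-z}` for `0 < q < 1`. -/
noncomputable def qGamma (q z : ℝ) : ℝ :=
  qPochR q q / qPochR (q ^ z) q * (1 - q) ^ (1 - z)

/-!
Sorting the factors of `(q ^ z; q ^ (1 / n))_∞` by the residue of their index modulo `n` gives
`∏_{k < n} (q ^ (z + k / n); q)_∞`, so `∏_{k < n} Γ_q(z + k / n)` has a closed form for every `z`.
At `z = 1 / n` the last factor is `Γ_q(1) = 1`, and the power of `1 - q` in the closed form is
absorbed by `Γ_q(1 / 2) (q ^ (1 / 2); q)_∞ = (q; q)_∞ (1 - q) ^ (1 / 2)`.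
-/

theorem hasProd_prod_range_of_residues {M : Type*} [CommMonoid M] [TopologicalSpace M]
    [ContinuousMul M] {f g : ℕ → M} {n : ℕ} (hn : n ≠ 0)
    (h : ∀ k < n, HasProd (fun j => f (n * j + k)) (g k)) :
    HasProd f (∏ k ∈ Finset.range n, g k) := by
  have residue_class (k : ℕ) (hk : k ∈ Finset.range n) :
      HasProd (fun i => if i % n = k then f i else 1) (g k) := by
    have hkn : k < n := Finset.mem_range.mp hk
    have inj : Function.Injective fun j => n * j + k := fun i j hij =>
      Nat.eq_of_mul_eq_mul_left (Nat.pos_of_ne_zero hn) (Nat.add_right_cancel hij)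
    refine (inj.hasProd_iff fun i hi => if_neg ?_).mp ?_
    · rintro rfl
      exact hi ⟨i / n, Nat.div_add_mod i n⟩
    · simpa only [Function.comp_def, Nat.mul_add_mod, Nat.mod_eq_of_lt hkn, if_true] using h k hkn
  refine (hasProd_prod residue_class).congr_fun fun i => ?_
  rw [Finset.prod_ite_eq, if_pos (Finset.mem_range.mpr (Nat.mod_lt i (Nat.pos_of_ne_zero hn)))]

theorem sum_range_one_sub_add_div {K : Type*} [Field K] [CharZero K] (z : K) {n : ℕ}
    (hn : n ≠ 0) :
    ∑ k ∈ Finset.range n, (1 - (z + (k : K) / n)) = n * (1 - z) - (n - 1) / 2 := by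
  have gauss : (∑ k ∈ Finset.range n, (k : K)) * 2 = n * (n - 1) := by
    have h := congrArg (Nat.cast : ℕ → K) (Finset.sum_range_id_mul_two n)
    rwa [Nat.cast_mul, Nat.cast_mul, Nat.cast_sum, Nat.cast_ofNat,
      Nat.cast_pred (Nat.pos_of_ne_zero hn)] at h
  have hnK : (n : K) ≠ 0 := Nat.cast_ne_zero.mpr hn
  simp only [← sub_sub, Finset.sum_sub_distrib, ← Finset.sum_div, Finset.sum_const,
    Finset.card_range, nsmul_eq_mul, eq_div_of_mul_eq two_ne_zero gauss]
  field_simp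

section qPochhammer

variable {q : ℝ}

theorem summable_neg_mul_pow (a : ℝ) (hq : |q| < 1) : Summable fun i : ℕ => -(a * q ^ i) :=
  ((summable_geometric_of_abs_lt_one hq).mul_left a).neg

theorem hasProd_qPochR (a : ℝ) (hq : |q| < 1) :
    HasProd (fun i : ℕ => 1 - a * q ^ i) (qPochR a q) := by
  have h := Real.multipliable_one_add_of_summable (summable_neg_mul_pow a hq)
  simp only [← sub_eq_add_neg] at h
  exact h.hasProd

theorem qPochR_ne_zero {a : ℝ} (hq : |q| < 1) (ha : ∀ i : ℕ, a * q ^ i ≠ 1) :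
    qPochR a q ≠ 0 := by
  simpa only [qPochR, sub_eq_add_neg] using
    tprod_one_add_ne_zero_of_summable (f := fun i : ℕ => -(a * q ^ i))
      (fun i => by simpa only [← sub_eq_add_neg] using sub_ne_zero.mpr (ha i).symm)
      (summable_neg_mul_pow a hq).norm

theorem qPochR_eq_prod_range_pow (a : ℝ) (hq : |q| < 1) {n : ℕ} (hn : n ≠ 0) :
    qPochR a q = ∏ k ∈ Finset.range n, qPochR (a * q ^ k) (q ^ n) := by
  have hqn : |q ^ n| < 1 := abs_pow q n ▸ pow_lt_one₀ (abs_nonneg q) hq hn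
  refine (hasProd_qPochR a hq).unique (hasProd_prod_range_of_residues hn fun k _ => ?_)
  convert hasProd_qPochR (a * q ^ k) hqn using 3
  ring

theorem qPochR_rpow_ne_zero (hq0 : 0 < q) (hq1 : q < 1) {z : ℝ} (hz : ∀ m : ℕ, z ≠ -m) :
    qPochR (q ^ z) q ≠ 0 := by
  refine qPochR_ne_zero (abs_lt.mpr ⟨by linarith, hq1⟩) fun m => ?_
  rw [← Real.rpow_add_natCast hq0.ne', ← Real.rpow_zero q, Ne, Real.rpow_right_inj hq0 hq1.ne]
  exact fun h => hz m (eq_neg_of_add_eq_zero_left h)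

theorem prod_qPochR_rpow_add_div (hq0 : 0 < q) (hq1 : q < 1) (z : ℝ) {n : ℕ} (hn : n ≠ 0) :
    ∏ k ∈ Finset.range n, qPochR (q ^ (z + (k : ℝ) / n)) q =
      qPochR (q ^ z) (q ^ ((1 : ℝ) / n)) := by
  have root_lt_one : |q ^ ((1 : ℝ) / n)| < 1 := by
    rw [abs_of_pos (by positivity)]
    exact Real.rpow_lt_one hq0.le hq1 (by positivity)
  have root_pow (k : ℕ) : (q ^ ((1 : ℝ) / n)) ^ k = q ^ ((k : ℝ) / n) := by
    rw [← Real.rpow_mul_natCast hq0.le, one_div_mul_eq_div]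
  have root_pow_self : (q ^ ((1 : ℝ) / n)) ^ n = q := by
    rw [root_pow, div_self (Nat.cast_ne_zero.mpr hn), Real.rpow_one]
  simp only [qPochR_eq_prod_range_pow _ root_lt_one hn, root_pow_self, root_pow,
    Real.rpow_add hq0]

end qPochhammer

section qGamma

variable {q : ℝ}

theorem qGamma_mul_qPochR (hq0 : 0 < q) (hq1 : q < 1) {z : ℝ} (hz : ∀ m : ℕ, z ≠ -m) :
    qGamma q z * qPochR (q ^ z) q = qPochR q q * (1 - q) ^ (1 - z) := by
  rw [qGamma, mul_right_comm, div_mul_cancel₀ _ (qPochR_rpow_ne_zero hq0 hq1 hz)]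

theorem qGamma_one (hq0 : 0 < q) (hq1 : q < 1) : qGamma q 1 = 1 := by
  have hqq : qPochR (q ^ (1 : ℝ)) q ≠ 0 :=
    qPochR_rpow_ne_zero hq0 hq1 fun m => by linarith [m.cast_nonneg (α := ℝ)]
  rw [Real.rpow_one] at hqq
  rw [qGamma, Real.rpow_one, div_self hqq, sub_self, Real.rpow_zero, mul_one]

-- If some `z + k / n` is a pole of `Γ_q`, both sides are `0` by the convention `x / 0 = 0`.
theorem prod_qGamma_add_div (hq0 : 0 < q) (hq1 : q < 1) (z : ℝ) {n : ℕ} (hn : n ≠ 0) :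
    ∏ k ∈ Finset.range n, qGamma q (z + (k : ℝ) / n) =
      qPochR q q ^ n / qPochR (q ^ z) (q ^ ((1 : ℝ) / n)) *
        (1 - q) ^ ((n : ℝ) * (1 - z) - (n - 1) / 2) := by
  simp only [qGamma, Finset.prod_mul_distrib, Finset.prod_div_distrib, Finset.prod_const,
    Finset.card_range, prod_qPochR_rpow_add_div hq0 hq1 z hn,
    ← Real.rpow_sum_of_pos (sub_pos.mpr hq1), sum_range_one_sub_add_div z hn]

theorem prod_Icc_qGamma_div (hq0 : 0 < q) (hq1 : q < 1) {n : ℕ} (hn : n ≠ 0) :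
    ∏ k ∈ Finset.Icc 1 (n - 1), qGamma q ((k : ℝ) / n) =
      ∏ k ∈ Finset.range n, qGamma q (1 / n + (k : ℝ) / n) := by
  obtain ⟨m, rfl⟩ := Nat.exists_eq_add_one_of_ne_zero hn
  have last : qGamma q (((m + 1 : ℕ) : ℝ) / (m + 1 : ℕ)) = 1 := by
    rw [div_self (Nat.cast_ne_zero.mpr hn), qGamma_one hq0 hq1]
  simp only [← add_div, add_comm (1 : ℝ), ← Nat.cast_add_one]
  rw [Finset.prod_range_succ, last, mul_one, Finset.range_eq_Ico,
    Finset.prod_Ico_add' (fun k : ℕ => qGamma q ((k : ℝ) / (m + 1 : ℕ)))]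
  rfl

end qGamma

theorem q_gauss_multiplication_special (n : ℕ) (hn : 0 < n) (q : ℝ)
    (hq0 : 0 < q) (hq1 : q < 1) :
    ∏ k ∈ Finset.Icc 1 (n - 1), qGamma q ((k : ℝ) / n) =
      (qGamma q (1 / 2)) ^ (n - 1) * (qPochR (q ^ ((1 : ℝ) / 2)) q) ^ (n - 1) *
        qPochR q q / qPochR (q ^ ((1 : ℝ) / n)) (q ^ ((1 : ℝ) / n)) := by
  have half_not_pole (m : ℕ) : (1 / 2 : ℝ) ≠ -m := by linarith [m.cast_nonneg (α := ℝ)]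
  have exponent : (n : ℝ) * (1 - 1 / n) - (n - 1) / 2 = (1 - 1 / 2) * (n - 1 : ℕ) := by
    rw [Nat.cast_pred hn]
    field_simp
  rw [prod_Icc_qGamma_div hq0 hq1 hn.ne', prod_qGamma_add_div hq0 hq1 _ hn.ne', exponent,
    Real.rpow_mul_natCast (sub_pos.mpr hq1).le, ← mul_pow,
    qGamma_mul_qPochR hq0 hq1 half_not_pole, mul_pow, ← pow_sub_one_mul hn.ne']
  ring
end
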